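/- For real $\mu\ge 0$ and $z>0$ let $J_\mu(z)=\sum_{m=0}^\infty \frac{(-1)^m}{m!\,\Gamma(\mu+m+1)}\left(\frac z2\right)^{\mu+2m}$ be the Bessel function of the first kind of order $\mu$. Let $\nu\ge 1$ be a real number. Let $j_{\nu-1,1}<j_{\nu-1,2}<\cdots$ be the increasing enumeration of all positive zeroes of $J_{\nu-1}$, let $j'_{\nu-1,1}<j'_{\nu-1,2}<\cdots$ be that of all positive zeroes of the derivative $J'_{\nu-1}$, with the standard convention that for order $\nu-1=0$ the point $z=0$ is counted as the first zero of $J_0'$ (so $j'_{0,1}=0$, and $j'_{0,2}$ is the smallest positive zero of $J_0'$), and let $\lambda^-_{\nu-1,1}<\lambda^-_{\nu-1,2}<\cdots$ be that of all positive zeroes of $z\mapsto J_{\nu-1}(z)-J_\nu(z)$. Then for every integer $k\ge 1$ $$j_{\nu-1,k}<j'_{\nu-1,k+1}<\lambda^-_{\nu-1,k+1}<j_{\nu-1,k+1}.$$ -/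

import Mathlib

/-- Bessel function of the first kind of real order `ν`, defined by its power series
`J_ν(z) = ∑ₘ (−1)^m / (m! Γ(ν+m+1)) (z/2)^(ν+2m)` (with real-exponent powers). -/
noncomputable def besselJ (ν z : ℝ) : ℝ :=
  ∑' m : ℕ, ((-1 : ℝ) ^ m / (Nat.factorial m * Real.Gamma (ν + m + 1))) *
    (z / 2) ^ (ν + 2 * (m : ℝ))

/-- `x 1 < x 2 < x 3 < ...` lists exactly the elements of `S`; the value `x 0` is not used. -/
def Enumerates (S : Set ℝ) (x : ℕ → ℝ) : Prop :=
  StrictMonoOn x (Set.Ici 1) ∧ (∀ k, 1 ≤ k → x k ∈ S) ∧ ∀ z ∈ S, ∃ k, 1 ≤ k ∧ x k = z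

/-- The positive zeroes of `f`. -/
def posZeros (f : ℝ → ℝ) : Set ℝ := {z | 0 < z ∧ f z = 0}

/-- The zeroes of `J_μ′` that are listed as `j′_{μ,1} < j′_{μ,2} < ...`: the positive ones,
and for order `μ = 0` also `z = 0`, which by the standard convention is counted as the first
zero of `J_0′ = −J_1`, so that `j′_{0,1} = 0`. -/
def besselDerivZeros (μ : ℝ) : Set ℝ :=
  posZeros (deriv (besselJ μ)) ∪ {z | μ = 0 ∧ z = 0}

/-!
Write `μ = ν - 1`. The quadratic form `z² (J_μ² + J_{μ+1}²) - a z J_μ J_{μ+1}` has derivative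
`(2μ + 2 - a) z J_μ² + (a - 2μ) z J_{μ+1}²` and is positive near `0`, hence it is positive on
`(0, ∞)` for `2μ ≤ a < 2μ + 2`. It governs the derivative of `z^s J_{μ+1} / J_μ` with
`a = 2μ + 1 - s`, so for `-1 < s ≤ 1` this ratio increases strictly from `-∞` to `∞` between
consecutive zeroes of `J_μ` and from `0` to `∞` before the first one. The zeroes of `J_μ'` are the
points where the ratio takes the value `μ` for `s = 1`, those of `J_μ - J_{μ+1}` the points where
it takes the value `1` for `s = 0`, so both interlace with the zeroes of `J_μ`. At a zero `z` of
`J_μ'` the form with `a = 2μ` equals `(z² - μ²) J_μ²`, so `z > μ`, and `J_{μ+1} / J_μ = μ / z < 1`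
there: the ratio for `s = 0` reaches `1` only later.
-/

open Filter Topology Set

lemma hasDerivAt_ofScalarsSum {𝕜 : Type*} [NontriviallyNormedField 𝕜] [CompleteSpace 𝕜]
    {c : ℕ → 𝕜} (hc : (FormalMultilinearSeries.ofScalars 𝕜 c).radius = ⊤) (x : 𝕜) :
    HasDerivAt (FormalMultilinearSeries.ofScalarsSum c)
      (FormalMultilinearSeries.ofScalarsSum (fun n => (n + 1) * c (n + 1)) x) x := by
  have hx : ‖x‖ₑ < (FormalMultilinearSeries.ofScalars 𝕜 c).radius := hc ▸ enorm_lt_top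
  refine (FormalMultilinearSeries.hasFDerivAt_sum hx).hasDerivAt.congr_deriv ?_
  have hsum : Summable fun n => (FormalMultilinearSeries.ofScalars 𝕜 c).derivSeries n fun _ => x :=
    FormalMultilinearSeries.summable _ (by
      simpa using hx.trans_le (FormalMultilinearSeries.radius_le_radius_derivSeries _))
  rw [FormalMultilinearSeries.ofScalars_sum_eq]
  refine ((ContinuousLinearMap.apply 𝕜 𝕜 (1 : 𝕜)).map_tsum hsum).trans ?_
  refine tsum_congr fun n => ?_
  rw [ContinuousLinearMap.apply_apply, FormalMultilinearSeries.apply_eq_pow_smul_coeff, smul_apply,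
    FormalMultilinearSeries.derivSeries_coeff_one, FormalMultilinearSeries.coeff_ofScalars]
  simp [mul_comm]

lemma existsUnique_of_bijOn {α β : Type*} {f : α → β} {s : Set α} {t : Set β} (hf : BijOn f s t)
    {y : β} (hy : y ∈ t) : ∃! x, x ∈ s ∧ f x = y := by
  obtain ⟨x, hx, hxy⟩ := hf.surjOn hy
  exact ⟨x, ⟨hx, hxy⟩, fun z hz => hf.injOn hz.1 hx (hz.2.trans hxy.symm)⟩

lemma tendsto_atTop_of_tendsto_abs_of_eventually_ge {α G : Type*} [AddCommGroup G] [LinearOrder G]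
    [IsOrderedAddMonoid G] [Nontrivial G] {l : Filter α} {f : α → G} {C : G}
    (hf : Tendsto (fun x => |f x|) l atTop) (hC : ∀ᶠ x in l, C ≤ f x) :
    Tendsto f l atTop := by
  refine hf.congr' ?_
  filter_upwards [hf.eventually_gt_atTop (-C), hC] with x habs hle
  refine abs_of_nonneg (le_of_not_gt fun hneg => ?_)
  rw [abs_of_neg hneg, neg_lt_neg_iff] at habs
  exact habs.not_ge hle

lemma tendsto_atBot_of_tendsto_abs_of_eventually_le {α G : Type*} [AddCommGroup G] [LinearOrder G]
    [IsOrderedAddMonoid G] [Nontrivial G] {l : Filter α} {f : α → G} {C : G}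
    (hf : Tendsto (fun x => |f x|) l atTop) (hC : ∀ᶠ x in l, f x ≤ C) :
    Tendsto f l atBot := by
  refine tendsto_neg_atTop_iff.1 (tendsto_atTop_of_tendsto_abs_of_eventually_ge (C := -C) ?_ ?_)
  · simpa only [abs_neg] using hf
  · exact hC.mono fun x => neg_le_neg

namespace Enumerates

variable {S : Set ℝ} {j x : ℕ → ℝ} {k : ℕ}

lemma apply_one_le (hj : Enumerates S j) {z : ℝ} (hz : z ∈ S) : j 1 ≤ z := by
  obtain ⟨n, hn, rfl⟩ := hj.2.2 z hz
  exact hj.1.monotoneOn self_mem_Ici hn hn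

lemma apply_succ_le (hj : Enumerates S j) (hk : 1 ≤ k) {z : ℝ} (hz : z ∈ S) (hlt : j k < z) :
    j (k + 1) ≤ z := by
  obtain ⟨n, hn, rfl⟩ := hj.2.2 z hz
  exact hj.1.monotoneOn (hk.trans k.le_succ) hn ((hj.1.lt_iff_lt hk hn).1 hlt)

lemma lt_and_lt_apply_succ (hx : Enumerates S x) (hk : 1 ≤ k) {b : ℝ} (hb : b ∉ S)
    (h : ∃! t, t ∈ S ∧ x k ≤ t ∧ t < b) : x k < b ∧ b < x (k + 1) := by
  obtain ⟨t, ⟨-, hkt, htb⟩, hunique⟩ := h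
  have hlt : x k < x (k + 1) := hx.1 hk (hk.trans k.le_succ) k.lt_succ_self
  have hmem : x (k + 1) ∈ S := hx.2.1 _ (hk.trans k.le_succ)
  have hkb : x k < b := hkt.trans_lt htb
  refine ⟨hkb, lt_of_not_ge fun hle => hlt.ne ?_⟩
  rw [hunique _ ⟨hx.2.1 k hk, le_rfl, hkb⟩,
    hunique _ ⟨hmem, hlt.le, hle.lt_of_ne fun heq => hb (heq ▸ hmem)⟩]

lemma interlace (hx : Enumerates S x) (h_notMem : ∀ k, 1 ≤ k → j k ∉ S)
    (hfirst : ∃! t, t ∈ S ∧ t < j 1)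
    (hgap : ∀ k, 1 ≤ k → ∃! t, t ∈ S ∧ t ∈ Ioo (j k) (j (k + 1))) (hk : 1 ≤ k) :
    x (k + 1) ∈ Ioo (j k) (j (k + 1)) := by
  have hsep : ∀ n, 1 ≤ n → x n < j n ∧ j n < x (n + 1) := by
    intro n hn
    induction n, hn using Nat.le_induction with
    | base =>
      refine hx.lt_and_lt_apply_succ le_rfl (h_notMem 1 le_rfl)
        ((existsUnique_congr fun t => ?_).1 hfirst)
      exact and_congr_right fun ht => (and_iff_right (hx.apply_one_le ht)).symm
    | succ n hn ih =>
      refine hx.lt_and_lt_apply_succ n.succ_pos (h_notMem _ n.succ_pos)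
        ((existsUnique_congr fun t => ?_).1 (hgap n hn))
      exact and_congr_right fun ht => and_congr_left fun _ =>
        ⟨fun hlt => hx.apply_succ_le hn ht (ih.1.trans hlt), ih.2.trans_le⟩
  exact ⟨(hsep k hk).2, (hsep (k + 1) k.succ_pos).1⟩

end Enumerates

/-! ### The Bessel–Clifford series -/

/-- The coefficient `1 / (m! Γ(μ + m + 1))` of the Bessel–Clifford series; it vanishes where
`Γ` has a pole, since `Real.Gamma` is `0` there. -/
noncomputable def besselCliffordCoeff (μ : ℝ) (m : ℕ) : ℝ :=
  (m.factorial * Real.Gamma (μ + m + 1))⁻¹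

/-- The Bessel–Clifford function `C_μ(x) = ∑ₘ x^m / (m! Γ(μ + m + 1))`, the entire function with
`J_μ(z) = (z / 2)^μ C_μ(-(z / 2)²)`. -/
noncomputable def besselClifford (μ : ℝ) : ℝ → ℝ :=
  FormalMultilinearSeries.ofScalarsSum (besselCliffordCoeff μ)

lemma radius_ofScalars_besselCliffordCoeff (μ : ℝ) :
    (FormalMultilinearSeries.ofScalars ℝ (besselCliffordCoeff μ)).radius = ⊤ := by
  rw [eq_top_iff, ← Complex.radius_regularizedHGFunSeries_eq_top
    (a := 0) (b := {((μ + 1 : ℝ) : ℂ)}) (by simp)]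
  refine FormalMultilinearSeries.radius_le_of_le fun m => le_of_eq ?_
  have hGamma : Complex.Gamma (μ + 1 + m) = (Real.Gamma (μ + m + 1) : ℂ) := by
    rw [← Complex.Gamma_ofReal, add_right_comm μ]
    push_cast
    rfl
  simp [Complex.regularizedHGFunSeries, Complex.regularizedHGFunCoeff, besselCliffordCoeff, hGamma]

lemma hasSum_besselClifford (μ x : ℝ) :
    HasSum (fun m => besselCliffordCoeff μ m * x ^ m) (besselClifford μ x) := by
  have h := (FormalMultilinearSeries.ofScalars ℝ (besselCliffordCoeff μ)).hasSum
    (x := x) (by simp [radius_ofScalars_besselCliffordCoeff])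
  simp only [FormalMultilinearSeries.ofScalars_apply_eq, smul_eq_mul] at h
  exact h

lemma succ_mul_besselCliffordCoeff_succ (μ : ℝ) (m : ℕ) :
    (m + 1) * besselCliffordCoeff μ (m + 1) = besselCliffordCoeff (μ + 1) m := by
  have harg : μ + (m + 1 : ℕ) + 1 = μ + 1 + m + 1 := by push_cast; ring
  rw [besselCliffordCoeff, besselCliffordCoeff, harg, Nat.factorial_succ]
  push_cast
  field_simp

lemma besselCliffordCoeff_eq_mul_succ (μ : ℝ) (m : ℕ) :
    besselCliffordCoeff μ m = (μ + 1 + m) * besselCliffordCoeff (μ + 1) m := by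
  have harg : μ + 1 + m = μ + m + 1 := by ring
  rw [besselCliffordCoeff, besselCliffordCoeff, harg]
  rcases eq_or_ne (μ + m + 1) 0 with h | h
  · simp [h, Real.Gamma_zero]
  · rw [Real.Gamma_add_one h]
    field_simp

lemma hasDerivAt_besselClifford (μ x : ℝ) :
    HasDerivAt (besselClifford μ) (besselClifford (μ + 1) x) x := by
  have h := hasDerivAt_ofScalarsSum (radius_ofScalars_besselCliffordCoeff μ) x
  simp only [succ_mul_besselCliffordCoeff_succ] at h
  exact h

lemma continuous_besselClifford (μ : ℝ) : Continuous (besselClifford μ) :=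
  continuous_iff_continuousAt.2 fun x => (hasDerivAt_besselClifford μ x).continuousAt

lemma besselClifford_recurrence (μ x : ℝ) :
    besselClifford μ x = (μ + 1) * besselClifford (μ + 1) x + x * besselClifford (μ + 2) x := by
  have hshift : HasSum (fun m : ℕ => m * (besselCliffordCoeff (μ + 1) m * x ^ m))
      (x * besselClifford (μ + 2) x) := by
    rw [← hasSum_nat_add_iff' 1]
    have h := (hasSum_besselClifford (μ + 2) x).mul_left x
    simp only [show μ + 2 = μ + 1 + 1 by ring, ← succ_mul_besselCliffordCoeff_succ] at h ⊢
    simpa [pow_succ, mul_assoc, mul_comm, mul_left_comm] using h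
  refine (hasSum_besselClifford μ x).unique
    ((((hasSum_besselClifford (μ + 1) x).mul_left (μ + 1)).add hshift).congr_fun fun m => ?_)
  rw [besselCliffordCoeff_eq_mul_succ]
  ring

lemma besselClifford_zero_right (μ : ℝ) : besselClifford μ 0 = (Real.Gamma (μ + 1))⁻¹ := by
  simp [besselClifford, besselCliffordCoeff]

lemma besselJ_eq_rpow_mul_besselClifford (μ : ℝ) {z : ℝ} (hz : 0 < z) :
    besselJ μ z = (z / 2) ^ μ * besselClifford μ (-(z / 2) ^ 2) := by
  rw [← ((hasSum_besselClifford μ _).mul_left _).tsum_eq, besselJ]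
  refine tsum_congr fun m => ?_
  have hpow : (z / 2) ^ (2 * (m : ℝ)) = ((z / 2) ^ 2) ^ m := by
    rw [← pow_mul, ← Real.rpow_natCast]
    push_cast
    rfl
  rw [Real.rpow_add (half_pos hz), hpow, neg_pow ((z / 2) ^ 2), besselCliffordCoeff]
  ring

lemma besselJ_add_two (μ : ℝ) {z : ℝ} (hz : 0 < z) :
    besselJ (μ + 2) z = 2 * (μ + 1) / z * besselJ (μ + 1) z - besselJ μ z := by
  have hz2 := half_pos hz
  rw [besselJ_eq_rpow_mul_besselClifford _ hz, besselJ_eq_rpow_mul_besselClifford _ hz,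
    besselJ_eq_rpow_mul_besselClifford _ hz, besselClifford_recurrence μ,
    Real.rpow_add_one hz2.ne', Real.rpow_add hz2, Real.rpow_two]
  field_simp
  ring

lemma hasDerivAt_besselJ (μ : ℝ) {z : ℝ} (hz : 0 < z) :
    HasDerivAt (besselJ μ) (μ / z * besselJ μ z - besselJ (μ + 1) z) z := by
  have hz2 := half_pos hz
  have hhalf : HasDerivAt (fun y : ℝ => y / 2) (1 / 2) z := (hasDerivAt_id z).div_const 2
  have hpow := hhalf.rpow_const (p := μ) (Or.inl hz2.ne')
  have hentire := (hasDerivAt_besselClifford μ (-(z / 2) ^ 2)).comp z (hhalf.pow 2).neg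
  have hprod := (hpow.mul hentire).congr_of_eventuallyEq (f₁ := besselJ μ) (by
    filter_upwards [lt_mem_nhds hz] with y hy
    exact besselJ_eq_rpow_mul_besselClifford μ hy)
  refine hprod.congr_deriv ?_
  rw [besselJ_eq_rpow_mul_besselClifford μ hz, besselJ_eq_rpow_mul_besselClifford (μ + 1) hz,
    Real.rpow_sub_one hz2.ne', Real.rpow_add_one hz2.ne']
  simp only [Function.comp_apply, Pi.neg_apply, Pi.pow_apply]
  field_simp
  ring

lemma hasDerivAt_besselJ_add_one (μ : ℝ) {z : ℝ} (hz : 0 < z) :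
    HasDerivAt (besselJ (μ + 1)) (besselJ μ z - (μ + 1) / z * besselJ (μ + 1) z) z := by
  refine (hasDerivAt_besselJ (μ + 1) hz).congr_deriv ?_
  rw [add_assoc, one_add_one_eq_two, besselJ_add_two μ hz]
  ring

lemma continuousAt_besselJ (μ : ℝ) {z : ℝ} (hz : 0 < z) : ContinuousAt (besselJ μ) z :=
  (hasDerivAt_besselJ μ hz).continuousAt

lemma tendsto_besselClifford_nhdsGT_zero (μ : ℝ) :
    Tendsto (fun z : ℝ => besselClifford μ (-(z / 2) ^ 2)) (𝓝[>] 0)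
      (𝓝 (Real.Gamma (μ + 1))⁻¹) := by
  have hcont : Continuous fun z : ℝ => besselClifford μ (-(z / 2) ^ 2) :=
    (continuous_besselClifford μ).comp (by fun_prop)
  simpa [besselClifford_zero_right] using (hcont.tendsto 0).mono_left nhdsWithin_le_nhds

lemma eventually_besselJ_pos {μ : ℝ} (hμ : -1 < μ) : ∀ᶠ z in 𝓝[>] 0, 0 < besselJ μ z := by
  have hlim : 0 < (Real.Gamma (μ + 1))⁻¹ := inv_pos.2 (Real.Gamma_pos_of_pos (by linarith))
  filter_upwards [self_mem_nhdsWithin,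
    (tendsto_besselClifford_nhdsGT_zero μ).eventually_const_lt hlim] with z hz hpos
  rw [besselJ_eq_rpow_mul_besselClifford μ hz]
  exact mul_pos (Real.rpow_pos_of_pos (half_pos hz) μ) hpos

lemma tendsto_besselJ_add_one_div_nhdsGT_zero {μ : ℝ} (hμ : -1 < μ) :
    Tendsto (fun z => besselJ (μ + 1) z / (z * besselJ μ z)) (𝓝[>] 0)
      (𝓝 (1 / (2 * μ + 2))) := by
  have hμ1 : 0 < μ + 1 := by linarith
  have hΓ : Real.Gamma (μ + 1) ≠ 0 := (Real.Gamma_pos_of_pos hμ1).ne'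
  have hlim := ((tendsto_besselClifford_nhdsGT_zero (μ + 1)).div
    (tendsto_besselClifford_nhdsGT_zero μ) (inv_ne_zero hΓ)).div_const 2
  have hval : (Real.Gamma (μ + 1 + 1))⁻¹ / (Real.Gamma (μ + 1))⁻¹ / 2 = 1 / (2 * μ + 2) := by
    rw [Real.Gamma_add_one hμ1.ne']
    field_simp
  rw [hval] at hlim
  refine hlim.congr' ?_
  filter_upwards [self_mem_nhdsWithin] with z hz
  have hz2 : 0 < z / 2 := half_pos hz
  have hpow : (z / 2) ^ μ ≠ 0 := (Real.rpow_pos_of_pos hz2 μ).ne'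
  have hz0 : z ≠ 0 := (mem_Ioi.1 hz).ne'
  rw [besselJ_eq_rpow_mul_besselClifford _ hz, besselJ_eq_rpow_mul_besselClifford _ hz,
    Real.rpow_add_one hz2.ne', Pi.div_apply]
  field_simp

/-! ### Positivity of a quadratic form -/

/-- A quadratic form in `(J_μ(z), J_{μ+1}(z))`. Up to a positive factor it is the derivative of
`z^s J_{μ+1}(z) / J_μ(z)` when `a = 2μ + 1 - s`, so its sign decides monotonicity. -/
noncomputable def besselForm (μ a z : ℝ) : ℝ :=
  z ^ 2 * (besselJ μ z ^ 2 + besselJ (μ + 1) z ^ 2) - a * z * besselJ μ z * besselJ (μ + 1) z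

lemma hasDerivAt_besselForm (μ a : ℝ) {z : ℝ} (hz : 0 < z) :
    HasDerivAt (besselForm μ a)
      ((2 * μ + 2 - a) * z * besselJ μ z ^ 2 + (a - 2 * μ) * z * besselJ (μ + 1) z ^ 2) z := by
  have hJ := hasDerivAt_besselJ μ hz
  have hK := hasDerivAt_besselJ_add_one μ hz
  have hz' := hasDerivAt_id z
  refine (((hz'.pow 2).mul ((hJ.pow 2).add (hK.pow 2))).sub
    (((hz'.const_mul a).mul hJ).mul hK)).congr_deriv ?_
  simp only [id_eq, Pi.pow_apply, Pi.mul_apply, Pi.add_apply]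
  field_simp
  ring

lemma monotoneOn_besselForm {μ a : ℝ} (ha : 2 * μ ≤ a) (ha' : a ≤ 2 * μ + 2) :
    MonotoneOn (besselForm μ a) (Ioi 0) := by
  have hderiv : ∀ z ∈ Ioi (0 : ℝ), HasDerivAt (besselForm μ a) _ z :=
    fun z hz => hasDerivAt_besselForm μ a hz
  refine monotoneOn_of_deriv_nonneg (convex_Ioi 0)
    (fun z hz => (hderiv z hz).continuousAt.continuousWithinAt) ?_ ?_ <;> rw [interior_Ioi]
  · exact fun z hz => (hderiv z hz).differentiableAt.differentiableWithinAt
  · intro z hz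
    have hz0 : 0 < z := hz
    have := sub_nonneg.2 ha
    have := sub_nonneg.2 ha'
    rw [(hderiv z hz).deriv]
    positivity

lemma eventually_besselForm_pos {μ a : ℝ} (hμ : -1 < μ) (ha : a < 2 * μ + 2) :
    ∀ᶠ z in 𝓝[>] 0, 0 < besselForm μ a z := by
  have hlim := ((tendsto_besselJ_add_one_div_nhdsGT_zero hμ).const_mul a).const_sub 1
  have hlim_pos : 0 < 1 - a * (1 / (2 * μ + 2)) := by
    rw [mul_one_div, sub_pos, div_lt_one (by linarith)]
    exact ha
  filter_upwards [self_mem_nhdsWithin, eventually_besselJ_pos hμ,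
    hlim.eventually_const_lt hlim_pos] with z hz hJ hfactor
  have hz0 : 0 < z := hz
  have hform : besselForm μ a z = z ^ 2 *
      ((1 - a * (besselJ (μ + 1) z / (z * besselJ μ z))) * besselJ μ z ^ 2 +
        besselJ (μ + 1) z ^ 2) := by
    rw [besselForm]
    field_simp
    ring
  rw [hform]
  positivity

lemma besselForm_pos {μ a z : ℝ} (hμ : -1 < μ) (ha : 2 * μ ≤ a) (ha' : a < 2 * μ + 2)
    (hz : 0 < z) : 0 < besselForm μ a z := by
  obtain ⟨y, hy, hyz⟩ := ((eventually_besselForm_pos hμ ha').and (Ioo_mem_nhdsGT hz)).exists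
  exact hy.trans_le (monotoneOn_besselForm ha ha'.le hyz.1 hz hyz.2.le)

lemma besselJ_add_one_ne_zero {μ z : ℝ} (hμ : -1 < μ) (hz : 0 < z) (hJ : besselJ μ z = 0) :
    besselJ (μ + 1) z ≠ 0 := fun hK => by
  have h := besselForm_pos hμ le_rfl (by linarith) hz
  simp [besselForm, hJ, hK] at h

lemma deriv_besselJ_eq_zero_iff (μ : ℝ) {z : ℝ} (hz : 0 < z) :
    deriv (besselJ μ) z = 0 ↔ z * besselJ (μ + 1) z = μ * besselJ μ z := by
  rw [(hasDerivAt_besselJ μ hz).deriv, sub_eq_zero, div_mul_eq_mul_div, div_eq_iff hz.ne', eq_comm,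
    mul_comm z]

lemma lt_of_deriv_besselJ_eq_zero {μ z : ℝ} (hμ : -1 < μ) (hz : 0 < z)
    (h : deriv (besselJ μ) z = 0) : μ < z := by
  rw [deriv_besselJ_eq_zero_iff μ hz] at h
  have hform : besselForm μ (2 * μ) z = (z ^ 2 - μ ^ 2) * besselJ μ z ^ 2 := by
    rw [besselForm]
    linear_combination (z * besselJ (μ + 1) z - μ * besselJ μ z) * h
  have hpos := besselForm_pos hμ le_rfl (by linarith) hz
  rw [hform] at hpos
  exact lt_of_pow_lt_pow_left₀ 2 hz.le (sub_pos.1 (pos_of_mul_pos_left hpos (sq_nonneg _)))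

/-! ### The ratio of consecutive Bessel functions -/

/-- The function `z^s J_{μ+1}(z) / J_μ(z)`. The zeroes of `J_μ - J_{μ+1}` are its `1`-points for
`s = 0`, those of `J_μ'` its `μ`-points for `s = 1`. At a zero of `J_μ` its value is the junk
value `0`. -/
noncomputable def besselRatio (μ s z : ℝ) : ℝ := z ^ s * besselJ (μ + 1) z / besselJ μ z

lemma hasDerivAt_besselRatio (μ s : ℝ) {z : ℝ} (hz : 0 < z) (hJ : besselJ μ z ≠ 0) :
    HasDerivAt (besselRatio μ s)
      (z ^ s * besselForm μ (2 * μ + 1 - s) z / (z * besselJ μ z) ^ 2) z := by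
  have hpow := Real.hasDerivAt_rpow_const (p := s) (Or.inl hz.ne')
  refine ((hpow.mul (hasDerivAt_besselJ_add_one μ hz)).div
    (hasDerivAt_besselJ μ hz) hJ).congr_deriv ?_
  rw [Real.rpow_sub_one hz.ne', besselForm, Pi.mul_apply]
  field_simp
  ring

section ZeroFreeInterval

variable {μ s a b : ℝ}

lemma continuousOn_besselRatio (ha : 0 ≤ a) (hJ : ∀ z ∈ Ioo a b, besselJ μ z ≠ 0) :
    ContinuousOn (besselRatio μ s) (Ioo a b) := fun z hz =>
  (hasDerivAt_besselRatio μ s (ha.trans_lt hz.1) (hJ z hz)).continuousAt.continuousWithinAt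

lemma strictMonoOn_besselRatio (hμ : -1 < μ) (hs : -1 < s) (hs1 : s ≤ 1) (ha : 0 ≤ a)
    (hJ : ∀ z ∈ Ioo a b, besselJ μ z ≠ 0) : StrictMonoOn (besselRatio μ s) (Ioo a b) := by
  refine strictMonoOn_of_deriv_pos (convex_Ioo a b) (continuousOn_besselRatio ha hJ) fun z hz => ?_
  rw [interior_Ioo] at hz
  have hz0 : 0 < z := ha.trans_lt hz.1
  have hJz := hJ z hz
  have hform := besselForm_pos (a := 2 * μ + 1 - s) hμ (by linarith) (by linarith) hz0
  rw [(hasDerivAt_besselRatio μ s hz0 hJz).deriv]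
  positivity

lemma tendsto_besselRatio_nhdsGT_zero (hμ : -1 < μ) (hs : -1 < s) :
    Tendsto (besselRatio μ s) (𝓝[>] 0) (𝓝 0) := by
  have hs1 : 0 < s + 1 := by linarith
  have hpow : Tendsto (fun z : ℝ => z ^ (s + 1)) (𝓝[>] 0) (𝓝 0) := by
    have h := (Real.continuousAt_rpow_const 0 (s + 1) (Or.inr hs1.le)).tendsto
    rw [Real.zero_rpow hs1.ne'] at h
    exact h.mono_left nhdsWithin_le_nhds
  have hlim := hpow.mul (tendsto_besselJ_add_one_div_nhdsGT_zero hμ)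
  rw [zero_mul] at hlim
  refine hlim.congr' ?_
  filter_upwards [self_mem_nhdsWithin] with z hz
  have hz0 : z ≠ 0 := (mem_Ioi.1 hz).ne'
  rw [besselRatio, Real.rpow_add_one hz0]
  field_simp

lemma tendsto_abs_besselRatio_nhdsNE (hμ : -1 < μ) (s : ℝ) (ha : 0 < a) (hJa : besselJ μ a = 0) :
    Tendsto (fun z => |besselRatio μ s z|) (𝓝[≠] a) atTop := by
  have hKa : besselJ (μ + 1) a ≠ 0 := besselJ_add_one_ne_zero hμ ha hJa
  have hden : ContinuousAt (fun z => z ^ s * besselJ (μ + 1) z) a :=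
    (Real.continuousAt_rpow_const a s (Or.inl ha.ne')).mul (continuousAt_besselJ _ ha)
  have hden_ne : a ^ s * besselJ (μ + 1) a ≠ 0 := mul_ne_zero (Real.rpow_pos_of_pos ha s).ne' hKa
  have hlim : Tendsto (fun z => besselJ μ z / (z ^ s * besselJ (μ + 1) z)) (𝓝[≠] a) (𝓝[≠] 0) := by
    refine tendsto_nhdsWithin_iff.2 ⟨?_, ?_⟩
    · have h := ((continuousAt_besselJ μ ha).div hden hden_ne).tendsto
      simp only [Pi.div_apply, hJa, zero_div] at h
      exact h.mono_left nhdsWithin_le_nhds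
    · have hderiv : μ / a * besselJ μ a - besselJ (μ + 1) a ≠ 0 := by simpa [hJa] using hKa
      filter_upwards [(hasDerivAt_besselJ μ ha).eventually_ne hderiv (c := 0),
        (hden.eventually_ne hden_ne).filter_mono nhdsWithin_le_nhds] with z hJz hdenz
      exact div_ne_zero hJz hdenz
  exact (tendsto_norm_inv_nhdsNE_zero_atTop.comp hlim).congr fun z => by
    rw [Function.comp_apply, inv_div, Real.norm_eq_abs, besselRatio]

lemma tendsto_besselRatio_nhdsLT_atTop (hμ : -1 < μ) (hs : -1 < s) (hs1 : s ≤ 1) (ha : 0 ≤ a)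
    (hab : a < b) (hJ : ∀ z ∈ Ioo a b, besselJ μ z ≠ 0) (hJb : besselJ μ b = 0) :
    Tendsto (besselRatio μ s) (𝓝[<] b) atTop := by
  obtain ⟨c, hac, hcb⟩ := exists_between hab
  refine tendsto_atTop_of_tendsto_abs_of_eventually_ge (C := besselRatio μ s c)
    ((tendsto_abs_besselRatio_nhdsNE hμ s (ha.trans_lt hab) hJb).mono_left (nhdsLT_le_nhdsNE b)) ?_
  filter_upwards [Ioo_mem_nhdsLT hcb] with z hz
  exact (strictMonoOn_besselRatio hμ hs hs1 ha hJ).monotoneOn ⟨hac, hcb⟩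
    ⟨hac.trans hz.1, hz.2⟩ hz.1.le

lemma tendsto_besselRatio_nhdsGT_atBot (hμ : -1 < μ) (hs : -1 < s) (hs1 : s ≤ 1) (ha : 0 < a)
    (hab : a < b) (hJ : ∀ z ∈ Ioo a b, besselJ μ z ≠ 0) (hJa : besselJ μ a = 0) :
    Tendsto (besselRatio μ s) (𝓝[>] a) atBot := by
  obtain ⟨c, hac, hcb⟩ := exists_between hab
  refine tendsto_atBot_of_tendsto_abs_of_eventually_le (C := besselRatio μ s c)
    ((tendsto_abs_besselRatio_nhdsNE hμ s ha hJa).mono_left (nhdsGT_le_nhdsNE a)) ?_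
  filter_upwards [Ioo_mem_nhdsGT hac] with z hz
  exact (strictMonoOn_besselRatio hμ hs hs1 ha.le hJ).monotoneOn ⟨hz.1, hz.2.trans hcb⟩
    ⟨hac, hcb⟩ hz.2.le

lemma bijOn_besselRatio_Ioo_univ (hμ : -1 < μ) (hs : -1 < s) (hs1 : s ≤ 1) (ha : 0 < a)
    (hab : a < b) (hJ : ∀ z ∈ Ioo a b, besselJ μ z ≠ 0) (hJa : besselJ μ a = 0)
    (hJb : besselJ μ b = 0) : BijOn (besselRatio μ s) (Ioo a b) univ := by
  have := nhdsGT_neBot_of_exists_gt ⟨b, hab⟩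
  have := nhdsLT_neBot_of_exists_lt ⟨a, hab⟩
  exact ⟨mapsTo_univ _ _, (strictMonoOn_besselRatio hμ hs hs1 ha.le hJ).injOn,
    isPreconnected_Ioo.intermediate_value_Iii
      (le_principal_iff.2 (Ioo_mem_nhdsGT hab)) (le_principal_iff.2 (Ioo_mem_nhdsLT hab))
      (continuousOn_besselRatio ha.le hJ)
      (tendsto_besselRatio_nhdsGT_atBot hμ hs hs1 ha hab hJ hJa)
      (tendsto_besselRatio_nhdsLT_atTop hμ hs hs1 ha.le hab hJ hJb)⟩

lemma besselRatio_pos (hμ : -1 < μ) (hs : -1 < s) (hs1 : s ≤ 1)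
    (hJ : ∀ z ∈ Ioo 0 b, besselJ μ z ≠ 0) {z : ℝ} (hz : z ∈ Ioo 0 b) :
    0 < besselRatio μ s z := by
  have hmono := strictMonoOn_besselRatio hμ hs hs1 le_rfl hJ
  obtain ⟨c, hc0, hcz⟩ := exists_between hz.1
  have hc : c ∈ Ioo 0 b := ⟨hc0, hcz.trans hz.2⟩
  refine lt_of_le_of_lt ?_ (hmono hc hz hcz)
  refine le_of_tendsto (tendsto_besselRatio_nhdsGT_zero hμ hs) ?_
  filter_upwards [Ioo_mem_nhdsGT hc0] with y hy
  exact hmono.monotoneOn ⟨hy.1, hy.2.trans hc.2⟩ hc hy.2.le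

lemma bijOn_besselRatio_Ioo_zero (hμ : -1 < μ) (hs : -1 < s) (hs1 : s ≤ 1) (hb : 0 < b)
    (hJ : ∀ z ∈ Ioo 0 b, besselJ μ z ≠ 0) (hJb : besselJ μ b = 0) :
    BijOn (besselRatio μ s) (Ioo 0 b) (Ioi 0) := by
  have := nhdsLT_neBot_of_exists_lt ⟨0, hb⟩
  exact ⟨fun z => besselRatio_pos hμ hs hs1 hJ,
    (strictMonoOn_besselRatio hμ hs hs1 le_rfl hJ).injOn,
    isPreconnected_Ioo.intermediate_value_Ioi
      (le_principal_iff.2 (Ioo_mem_nhdsGT hb)) (le_principal_iff.2 (Ioo_mem_nhdsLT hb))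
      (continuousOn_besselRatio le_rfl hJ)
      (tendsto_besselRatio_nhdsGT_zero hμ hs)
      (tendsto_besselRatio_nhdsLT_atTop hμ hs hs1 le_rfl hb hJ hJb)⟩

lemma lt_of_deriv_besselJ_eq_zero_of_besselJ_eq (hμ : -1 < μ) (ha : 0 ≤ a)
    (hJ : ∀ z ∈ Ioo a b, besselJ μ z ≠ 0) {y z : ℝ} (hy : y ∈ Ioo a b) (hz : z ∈ Ioo a b)
    (hy' : deriv (besselJ μ) y = 0) (hz' : besselJ μ z = besselJ (μ + 1) z) : y < z := by
  have hy0 : 0 < y := ha.trans_lt hy.1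
  have hratio_y : besselRatio μ 0 y = μ / y := by
    rw [deriv_besselJ_eq_zero_iff μ hy0] at hy'
    rw [besselRatio, Real.rpow_zero, one_mul, div_eq_div_iff (hJ y hy) hy0.ne', mul_comm, hy']
  have hratio_z : besselRatio μ 0 z = 1 := by
    rw [besselRatio, Real.rpow_zero, one_mul, ← hz', div_self (hJ z hz)]
  rw [← (strictMonoOn_besselRatio hμ (by norm_num) zero_le_one ha hJ).lt_iff_lt hy hz,
    hratio_y, hratio_z, div_lt_one hy0]
  exact lt_of_deriv_besselJ_eq_zero hμ hy0 hy'

end ZeroFreeInterval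

/-! ### Interlacing of zeroes -/

section Interlacing

variable {μ : ℝ} {j : ℕ → ℝ}

lemma Enumerates.besselJ_ne_zero_of_mem_Ioo_zero (hj : Enumerates (posZeros (besselJ μ)) j) {z : ℝ}
    (hz : z ∈ Ioo 0 (j 1)) : besselJ μ z ≠ 0 := fun hJ =>
  (hj.apply_one_le ⟨hz.1, hJ⟩).not_gt hz.2

lemma Enumerates.besselJ_ne_zero_of_mem_Ioo (hj : Enumerates (posZeros (besselJ μ)) j) {k : ℕ}
    (hk : 1 ≤ k) {z : ℝ} (hz : z ∈ Ioo (j k) (j (k + 1))) : besselJ μ z ≠ 0 := fun hJ =>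
  (hj.apply_succ_le hk ⟨(hj.2.1 k hk).1.trans hz.1, hJ⟩ hz.1).not_gt hz.2

lemma rpow_mul_besselJ_eq_iff {s c z : ℝ} (hJ : besselJ μ z ≠ 0) :
    z ^ s * besselJ (μ + 1) z = c * besselJ μ z ↔ besselRatio μ s z = c :=
  (div_eq_iff hJ).symm

lemma Enumerates.existsUnique_mem_lt_apply_one {T : Set ℝ} {s c : ℝ}
    (hj : Enumerates (posZeros (besselJ μ)) j) (hμ : -1 < μ) (hs : -1 < s) (hs1 : s ≤ 1)
    (hc : 0 < c)
    (hT : ∀ z, z ∈ T ↔ 0 < z ∧ z ^ s * besselJ (μ + 1) z = c * besselJ μ z) :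
    ∃! t, t ∈ T ∧ t < j 1 := by
  have hJ : ∀ z ∈ Ioo 0 (j 1), besselJ μ z ≠ 0 := fun z => hj.besselJ_ne_zero_of_mem_Ioo_zero
  obtain ⟨hj0, hj1⟩ := hj.2.1 1 le_rfl
  have hbij := bijOn_besselRatio_Ioo_zero hμ hs hs1 hj0 hJ hj1
  refine (existsUnique_congr fun t => ?_).1 (existsUnique_of_bijOn hbij hc)
  rw [hT, and_right_comm, mem_Ioo]
  exact and_congr_right fun ht => (rpow_mul_besselJ_eq_iff (hJ t ht)).symm

lemma Enumerates.interlace_besselJ {T : Set ℝ} {x : ℕ → ℝ} {s c : ℝ} {k : ℕ} (hμ : -1 < μ)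
    (hs : -1 < s) (hs1 : s ≤ 1) (hx : Enumerates T x) (hj : Enumerates (posZeros (besselJ μ)) j)
    (hT : ∀ z, 0 < z → (z ∈ T ↔ z ^ s * besselJ (μ + 1) z = c * besselJ μ z))
    (hfirst : ∃! t, t ∈ T ∧ t < j 1) (hk : 1 ≤ k) : x (k + 1) ∈ Ioo (j k) (j (k + 1)) := by
  refine hx.interlace (fun n hn => ?_) hfirst (fun n hn => ?_) hk
  · obtain ⟨hpos, hzero⟩ := hj.2.1 n hn
    rw [hT _ hpos, hzero, mul_zero]
    exact mul_ne_zero (Real.rpow_pos_of_pos hpos s).ne' (besselJ_add_one_ne_zero hμ hpos hzero)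
  · obtain ⟨hpos, hzero⟩ := hj.2.1 n hn
    have hJ : ∀ z ∈ Ioo (j n) (j (n + 1)), besselJ μ z ≠ 0 :=
      fun z => hj.besselJ_ne_zero_of_mem_Ioo hn
    have hbij := bijOn_besselRatio_Ioo_univ hμ hs hs1 hpos
      (hj.1 hn (hn.trans n.le_succ) n.lt_succ_self) hJ hzero (hj.2.1 _ n.succ_pos).2
    refine (existsUnique_congr fun t => ?_).1 (existsUnique_of_bijOn hbij (mem_univ c))
    rw [and_comm (b := t ∈ Ioo _ _)]
    exact and_congr_right fun ht =>
      (rpow_mul_besselJ_eq_iff (hJ t ht)).symm.trans (hT t (hpos.trans ht.1)).symm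

lemma mem_besselDerivZeros_iff_deriv_eq_zero {z : ℝ} (hz : 0 < z) :
    z ∈ besselDerivZeros μ ↔ deriv (besselJ μ) z = 0 := by
  simp [besselDerivZeros, posZeros, hz, hz.ne']

lemma mem_besselDerivZeros_iff {z : ℝ} (hz : 0 < z) :
    z ∈ besselDerivZeros μ ↔ z ^ (1 : ℝ) * besselJ (μ + 1) z = μ * besselJ μ z := by
  rw [mem_besselDerivZeros_iff_deriv_eq_zero hz, deriv_besselJ_eq_zero_iff μ hz, Real.rpow_one]

lemma Enumerates.existsUnique_mem_besselDerivZeros_lt_apply_one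
    (hj : Enumerates (posZeros (besselJ μ)) j) (hμ : 0 ≤ μ) :
    ∃! t, t ∈ besselDerivZeros μ ∧ t < j 1 := by
  have hμ1 : -1 < μ := by linarith
  rcases hμ.eq_or_lt with rfl | hμ0
  · refine ⟨0, ⟨Or.inr ⟨rfl, rfl⟩, (hj.2.1 1 le_rfl).1⟩, ?_⟩
    rintro t ⟨ht | ⟨-, rfl⟩, htj⟩
    · have hJ : ∀ z ∈ Ioo 0 (j 1), besselJ 0 z ≠ 0 := fun z => hj.besselJ_ne_zero_of_mem_Ioo_zero
      have hmem : t ∈ Ioo 0 (j 1) := ⟨ht.1, htj⟩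
      have hratio : besselRatio 0 1 t = 0 :=
        (rpow_mul_besselJ_eq_iff (hJ t hmem)).1 ((mem_besselDerivZeros_iff ht.1).1 (Or.inl ht))
      exact absurd hratio (besselRatio_pos hμ1 (by norm_num) le_rfl hJ hmem).ne'
    · rfl
  · refine hj.existsUnique_mem_lt_apply_one hμ1 (by norm_num) le_rfl hμ0 fun z => ?_
    rw [← and_congr_right fun hz => mem_besselDerivZeros_iff hz, iff_and_self]
    rintro (hz | ⟨h, -⟩)
    exacts [hz.1, absurd h hμ0.ne']

lemma Enumerates.besselDerivZeros_mem_Ioo (hμ : 0 ≤ μ) {j' : ℕ → ℝ}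
    (hj : Enumerates (posZeros (besselJ μ)) j) (hj' : Enumerates (besselDerivZeros μ) j') {k : ℕ}
    (hk : 1 ≤ k) : j' (k + 1) ∈ Ioo (j k) (j (k + 1)) :=
  hj'.interlace_besselJ (by linarith) (by norm_num) le_rfl hj
    (fun _ hz => mem_besselDerivZeros_iff hz)
    (hj.existsUnique_mem_besselDerivZeros_lt_apply_one hμ) hk

lemma mem_posZeros_besselJ_sub_iff {z : ℝ} :
    z ∈ posZeros (fun z => besselJ μ z - besselJ (μ + 1) z) ↔
      0 < z ∧ z ^ (0 : ℝ) * besselJ (μ + 1) z = 1 * besselJ μ z := by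
  rw [Real.rpow_zero, one_mul, one_mul, posZeros, mem_ofPred_eq, sub_eq_zero,
    eq_comm (a := besselJ μ z)]

lemma Enumerates.besselJ_sub_zero_mem_Ioo (hμ : -1 < μ) {lam : ℕ → ℝ}
    (hj : Enumerates (posZeros (besselJ μ)) j)
    (hlam : Enumerates (posZeros (fun z => besselJ μ z - besselJ (μ + 1) z)) lam) {k : ℕ}
    (hk : 1 ≤ k) : lam (k + 1) ∈ Ioo (j k) (j (k + 1)) :=
  hlam.interlace_besselJ hμ (by norm_num) zero_le_one hj
    (fun _ hz => mem_posZeros_besselJ_sub_iff.trans (and_iff_right hz))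
    (hj.existsUnique_mem_lt_apply_one hμ (by norm_num) zero_le_one one_pos
      fun _ => mem_posZeros_besselJ_sub_iff) hk

end Interlacing

/-- For `ν ≥ 1` and every `k ≥ 1`,
`j_{ν−1,k} < j′_{ν−1,k+1} < λ⁻_{ν−1,k+1} < j_{ν−1,k+1}`. -/
theorem stmt5 (ν : ℝ) (hν : 1 ≤ ν) (j j' lam : ℕ → ℝ)
    (hj : Enumerates (posZeros (besselJ (ν - 1))) j)
    (hj' : Enumerates (besselDerivZeros (ν - 1)) j')
    (hlam : Enumerates (posZeros (fun z => besselJ (ν - 1) z - besselJ ν z)) lam)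
    (k : ℕ) (hk : 1 ≤ k) :
    j k < j' (k + 1) ∧ j' (k + 1) < lam (k + 1) ∧ lam (k + 1) < j (k + 1) := by
  obtain ⟨μ, rfl⟩ : ∃ μ, ν = μ + 1 := ⟨ν - 1, by ring⟩
  rw [add_sub_cancel_right] at hj hj' hlam
  have hμ : 0 ≤ μ := by linarith
  have hμ1 : -1 < μ := by linarith
  have hjk : 0 < j k := (hj.2.1 k hk).1
  have hj'_mem := hj.besselDerivZeros_mem_Ioo hμ hj' hk
  have hlam_mem := hj.besselJ_sub_zero_mem_Ioo hμ1 hlam hk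
  refine ⟨hj'_mem.1, ?_, hlam_mem.2⟩
  have hderiv : deriv (besselJ μ) (j' (k + 1)) = 0 :=
    (mem_besselDerivZeros_iff_deriv_eq_zero (hjk.trans hj'_mem.1)).1 (hj'.2.1 _ k.succ_pos)
  have hlam_eq : besselJ μ (lam (k + 1)) = besselJ (μ + 1) (lam (k + 1)) :=
    sub_eq_zero.1 (hlam.2.1 _ k.succ_pos).2
  exact lt_of_deriv_besselJ_eq_zero_of_besselJ_eq hμ1 hjk.le
    (fun z => hj.besselJ_ne_zero_of_mem_Ioo hk) hj'_mem hlam_mem hderiv hlam_eq
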